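/- Every 4-local Nash equilibrium of the 4-local degree price network creation game (deg4NCG) whose induced graph is connected has diameter at most 3. -/

import Mathlib

/-!
If the diameter were at least `4`, a shortest path between two farthest nodes would contain nodes
`u`, `v` at distance exactly `4`.  Let `u` additionally buy the edge to `v`, a move the `4`-local
game allows.  It costs `deg v`, the degree of `v` before the move.  Every neighbour of `v` was at
distance at least `3` from `u` and is now at distance at most `2`, so the neighbours alone save
`deg v`; the node `v` itself saves `3` more.  Hence the move is strictly improving
(`one_add_indicator_le` is the saving node by node, `deg_update_self_le` and `deg_update_le` give
the price), contradicting equilibrium.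
-/

/-!
Degree price network creation games (degNCG / degkNCG / degAOG / degkAOG).

A strategy vector assigns to each agent `u` a finite set `st u` of nodes to
which `u` buys an edge.  The induced graph has an edge `{u,v}` iff `v ∈ st u`
or `u ∈ st v`.  The cost of agent `u` is the sum of `deg v - 1` over all `v`
to which `u` bought an edge, plus the sum of (extended, i.e. `⊤` when
unreachable) graph distances from `u` to all nodes.
-/

/-- A strategy vector: each agent picks the set of nodes it buys edges to. -/
abbrev Strategy (V : Type) := V → Finset V

variable {V : Type} [Fintype V] [DecidableEq V]

/-- The network induced by a strategy vector: `{u,v}` is an edge iff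
`v ∈ st u` or `u ∈ st v`. -/
def netG (st : Strategy V) : SimpleGraph V :=
  SimpleGraph.fromRel (fun u v => v ∈ st u)

/-- The degree of a node in the induced network. -/
noncomputable def deg (st : Strategy V) (v : V) : ℕ :=
  letI : DecidableRel (netG st).Adj := Classical.decRel _
  (netG st).degree v

/-- The cost of agent `u`: degree-prices of the bought edges plus the sum of
the distances to all nodes (`⊤` if some node is unreachable). -/
noncomputable def cost (st : Strategy V) (u : V) : ℕ∞ :=
  ((∑ v ∈ st u, (deg st v - 1) : ℕ) : ℕ∞) + ∑ w, (netG st).edist u w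

/-- A strategy vector is valid if nobody buys a self-loop and every edge has
exactly one owner. -/
def Valid (st : Strategy V) : Prop :=
  (∀ u, u ∉ st u) ∧ (∀ u v, v ∈ st u → u ∉ st v)

/-- Pure Nash equilibrium of the degNCG: no agent can strictly decrease her
cost by unilaterally switching to any other strategy. -/
def IsNE (st : Strategy V) : Prop :=
  ∀ (u : V) (t : Finset V), u ∉ t →
    cost st u ≤ cost (Function.update st u t) u

/-- `k`-local Nash equilibrium of the degkNCG: no agent can strictly decrease
her cost by a deviation in which every newly bought edge goes to a node at
distance at most `k` in the current graph. -/
def IskNE (k : ℕ) (st : Strategy V) : Prop :=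
  ∀ (u : V) (t : Finset V), u ∉ t →
    (∀ v ∈ t \ st u, (netG st).edist u v ≤ k) →
    cost st u ≤ cost (Function.update st u t) u

/-- Equilibrium of the add-only game degAOG: no agent can strictly decrease
her cost by adding edges (deviations are supersets of the current strategy). -/
def IsAOEq (st : Strategy V) : Prop :=
  ∀ (u : V) (t : Finset V), u ∉ t → st u ⊆ t →
    cost st u ≤ cost (Function.update st u t) u

/-- Equilibrium of the `k`-local add-only game degkAOG. -/
def IskAOEq (k : ℕ) (st : Strategy V) : Prop :=
  ∀ (u : V) (t : Finset V), u ∉ t → st u ⊆ t →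
    (∀ v ∈ t \ st u, (netG st).edist u v ≤ k) →
    cost st u ≤ cost (Function.update st u t) u

/-- The social cost: the sum of all agents' costs. -/
noncomputable def social (st : Strategy V) : ℕ∞ :=
  ∑ u, cost st u

/-- The center sponsored spanning star on `n + 2` nodes: agent `0` buys an
edge to every other agent, everybody else buys nothing. -/
def starStrat (n : ℕ) : Strategy (Fin (n + 2)) := fun u =>
  if u = 0 then ({0} : Finset (Fin (n + 2)))ᶜ else ∅

lemma netG_adj {W : Type} (st : Strategy W) (a b : W) :
    (netG st).Adj a b ↔ a ≠ b ∧ (b ∈ st a ∨ a ∈ st b) := by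
  simp [netG, SimpleGraph.fromRel_adj]

lemma netG_update_adj (st : Strategy V) {u v : V} (huv : u ≠ v) (a b : V) :
    (netG (Function.update st u (insert v (st u)))).Adj a b ↔
      (netG st).Adj a b ∨ (a = u ∧ b = v) ∨ (a = v ∧ b = u) := by
  simp only [netG_adj, Function.update_apply]
  split_ifs <;> grind

lemma netG_le_update (st : Strategy V) {u v : V} (huv : u ≠ v) :
    netG st ≤ netG (Function.update st u (insert v (st u))) :=
  fun a b h => (netG_update_adj st huv a b).2 (Or.inl h)

/-- Since prices are degree minus one, measured after the move, the new edge to `v` costs `u` at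
most the old degree of `v`. -/
lemma deg_update_self_le (st : Strategy V) {u v : V} (huv : u ≠ v) :
    deg (Function.update st u (insert v (st u))) v ≤ deg st v + 1 := by
  classical
  unfold deg
  simp only [← SimpleGraph.card_neighborFinset_eq_degree]
  refine le_trans (Finset.card_le_card (t := insert u ((netG st).neighborFinset v)) ?_)
    (Finset.card_insert_le _ _ |>.trans (le_of_eq (by congr!)))
  intro w
  simp only [SimpleGraph.mem_neighborFinset, netG_update_adj st huv, Finset.mem_insert]
  grind

lemma deg_update_le (st : Strategy V) {u v w : V} (huv : u ≠ v) (hu : w ≠ u) (hw : w ≠ v) :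
    deg (Function.update st u (insert v (st u))) w ≤ deg st w := by
  classical
  unfold deg
  simp only [← SimpleGraph.card_neighborFinset_eq_degree]
  refine Finset.card_le_card ?_
  intro x
  simp only [SimpleGraph.mem_neighborFinset, netG_update_adj st huv]
  grind

/-- Buying the edge to `v` saves `u` at least `1` in the distance to `v` and to each neighbour
of `v`, and never increases a distance.  The node `v` really saves `3`, but `1` suffices. -/
lemma one_add_indicator_le (st : Strategy V) {u v : V} (hc : (netG st).Connected)
    (h4 : (netG st).dist u v = 4) (w : V) [Decidable ((netG st).Adj v w)] :
    (netG (Function.update st u (insert v (st u)))).dist u w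
      + ((if w = v then 1 else 0) + if (netG st).Adj v w then 1 else 0)
      ≤ (netG st).dist u w := by
  have huv : u ≠ v := by rintro rfl; simp at h4
  have hle := netG_le_update st huv
  set G' := netG (Function.update st u (insert v (st u))) with hG'
  have hc' : G'.Connected := hc.mono hle
  have hadj : G'.Adj u v := (netG_update_adj st huv u v).2 (by simp)
  have h1 : G'.dist u v = 1 := SimpleGraph.dist_eq_one_iff_adj.2 hadj
  by_cases hwv : w = v
  · subst hwv
    simp [h1, h4]
  · by_cases ha : (netG st).Adj v w
    · have h2 : G'.dist u w ≤ G'.dist u v + G'.dist v w := hc'.dist_triangle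
      have h3 : G'.dist v w = 1 := SimpleGraph.dist_eq_one_iff_adj.2 (hle ha)
      have h5 : (netG st).dist u v ≤ (netG st).dist u w + (netG st).dist w v := hc.dist_triangle
      have h6 : (netG st).dist w v = 1 := SimpleGraph.dist_eq_one_iff_adj.2 ha.symm
      simp only [hwv, ha, if_true, if_false]
      omega
    · simpa [hwv, ha] using (hc u w).dist_anti hle

lemma cost_eq_of_connected {W : Type} [Fintype W] (st : Strategy W)
    (hc : (netG st).Connected) (u : W) :
    cost st u = ((∑ v ∈ st u, (deg st v - 1) + ∑ w, (netG st).dist u w : ℕ) : ℕ∞) := by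
  unfold cost
  push_cast
  congr 1
  exact Finset.sum_congr rfl fun w _ => ((hc u w).coe_dist_eq_edist).symm

/-- Buying an edge to a node at distance `4` is strictly improving. -/
lemma cost_update_lt (st : Strategy V) (hv : Valid st) {u v : V} (hc : (netG st).Connected)
    (h4 : (netG st).dist u v = 4) :
    cost (Function.update st u (insert v (st u))) u < cost st u := by
  classical
  have huv : u ≠ v := by rintro rfl; simp at h4
  have hvu : v ∉ st u := by
    intro h
    have : (netG st).dist u v = 1 :=
      SimpleGraph.dist_eq_one_iff_adj.2 ((netG_adj st u v).2 ⟨huv, Or.inl h⟩)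
    omega
  rw [cost_eq_of_connected st hc,
    cost_eq_of_connected _ (hc.mono (netG_le_update st huv)), Nat.cast_lt]
  have hsum := Finset.sum_le_sum fun w (_ : w ∈ Finset.univ) => one_add_indicator_le st hc h4 w
  have hdeg : (∑ w, if (netG st).Adj v w then 1 else 0) = deg st v := by
    unfold deg
    rw [← SimpleGraph.card_neighborFinset_eq_degree, SimpleGraph.neighborFinset_eq_filter,
      Finset.card_filter]
  simp only [Finset.sum_add_distrib, hdeg, Finset.sum_ite_eq', Finset.mem_univ, if_true] at hsum
  have hself := deg_update_self_le st huv
  have hprice : ∑ w ∈ st u, (deg (Function.update st u (insert v (st u))) w - 1)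
      ≤ ∑ w ∈ st u, (deg st w - 1) := by
    refine Finset.sum_le_sum fun w hw => Nat.sub_le_sub_right (deg_update_le st huv ?_ ?_) 1
    · rintro rfl; exact hv.1 _ hw
    · rintro rfl; exact hvu hw
  -- The new edge costs at most `deg st v`, while distances shrink by at least `deg st v + 1`.
  rw [Function.update_self, Finset.sum_insert hvu]
  omega

/-- Every 4-local Nash equilibrium of the deg4NCG whose induced
graph is connected has diameter at most 3. -/
theorem diam_4NE_le_three (n : ℕ) (st : Strategy (Fin n)) (hv : Valid st)
    (hne : IskNE 4 st) (hc : (netG st).Connected) :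
    (netG st).diam ≤ 3 := by
  by_contra! hd
  have := hc.nonempty
  obtain ⟨a, b, hab⟩ := (netG st).exists_dist_eq_diam
  obtain ⟨p, hp⟩ := hc.exists_walk_length_eq_dist a b
  -- The node `4` steps along a shortest walk is at distance exactly `4` from its start.
  have h4 : (netG st).dist a (p.getVert 4) = 4 := by
    have h1 : (netG st).dist a (p.getVert 4) ≤ 4 :=
      (SimpleGraph.dist_le (p.take 4)).trans (by simp [SimpleGraph.Walk.take_length])
    have h2 : (netG st).dist (p.getVert 4) b ≤ p.length - 4 :=
      (SimpleGraph.dist_le (p.drop 4)).trans (by simp [SimpleGraph.Walk.drop_length])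
    have h3 : (netG st).dist a b ≤ (netG st).dist a (p.getVert 4)
      + (netG st).dist (p.getVert 4) b := hc.dist_triangle
    omega
  refine (cost_update_lt st hv hc h4).not_ge (hne a _ ?_ ?_)
  · rw [Finset.mem_insert, not_or]
    refine ⟨fun h => ?_, hv.1 a⟩
    rw [← h] at h4
    simp at h4
  · intro w hw
    obtain rfl : w = p.getVert 4 := by
      simp only [Finset.mem_sdiff, Finset.mem_insert] at hw
      tauto
    rw [← (hc a _).coe_dist_eq_edist, h4]
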